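/- Fix ε > 0, b ≥ 5ε, and a positive integer n. Then for each j ∈ {1, 2, 3} there exists a constant c > 0 (depending on n, b, j) such that |χ_{n,ε,b}^{(j)}(x)| ≤ c + χ_{n,ε,b}(x) for all x ∈ ℝ, where χ^{(j)} denotes the j-th derivative. -/

import Mathlib

open MeasureTheory Set

/-- The rescaled mollifier `ρ_ε(x) = ε⁻¹ ρ(x/ε)`. -/
noncomputable def mollifier (ρ : ℝ → ℝ) (ε : ℝ) (x : ℝ) : ℝ := ε⁻¹ * ρ (x / ε)

/-- The piecewise linear ramp `ν_{ε,b}`. -/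
noncomputable def nuFun (ε b : ℝ) (x : ℝ) : ℝ :=
  if x ≤ 2 * ε then 0 else if x ≤ b - ε then (x - 2 * ε) / (b - 3 * ε) else 1

/-- The cut-off function `χ_{0,ε,b} = ρ_ε ∗ ν_{ε,b}`. -/
noncomputable def chi0 (ρ : ℝ → ℝ) (ε b : ℝ) (x : ℝ) : ℝ :=
  ∫ y : ℝ, mollifier ρ ε (x - y) * nuFun ε b y

/-- The weighted cut-off `χ_{n,ε,b}(x) = x^n χ_{0,ε,b}(x)`. -/
noncomputable def chiN (ρ : ℝ → ℝ) (n : ℕ) (ε b : ℝ) (x : ℝ) : ℝ :=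
  x ^ n * chi0 ρ ε b x

/-!
For `ε > 0` the function `χ_{n,ε,b}` vanishes near `-∞` and equals `x ^ n` near `+∞`, because the
kernel `ρ_ε` has compact support and total mass one while the ramp is constant near both ends.
Hence `|χ⁽ʲ⁾| - χ` is eventually nonpositive at both ends: near `+∞` it is
`n (n - 1) ⋯ (n - j + 1) x ^ (n - j) - x ^ n ≤ n ^ j x ^ (n - j) - x ^ n`, which is nonpositive
once `x ≥ n`. Being continuous, it is bounded above.
-/

open Filter Metric
open scoped Convolution

section Eventually

variable {P : ℝ → Prop}

lemma eventually_forall_mem_ball_atTop (h : ∀ᶠ x in atTop, P x) (R : ℝ) :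
    ∀ᶠ x in atTop, ∀ y ∈ ball x R, P y := by
  obtain ⟨N, hN⟩ := eventually_atTop.1 h
  filter_upwards [eventually_ge_atTop (N + R)] with x hx y hy
  rw [Real.ball_eq_Ioo] at hy
  exact hN y (by linarith [hy.1])

lemma eventually_forall_mem_ball_atBot (h : ∀ᶠ x in atBot, P x) (R : ℝ) :
    ∀ᶠ x in atBot, ∀ y ∈ ball x R, P y := by
  obtain ⟨N, hN⟩ := eventually_atBot.1 h
  filter_upwards [eventually_le_atBot (N - R)] with x hx y hy
  rw [Real.ball_eq_Ioo] at hy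
  exact hN y (by linarith [hy.2])

end Eventually

section IteratedDeriv

variable {F : Type*} [NormedAddCommGroup F] [NormedSpace ℝ F] {f g : ℝ → F}

lemma iteratedDeriv_eventuallyEq_atTop (h : f =ᶠ[atTop] g) (j : ℕ) :
    iteratedDeriv j f =ᶠ[atTop] iteratedDeriv j g :=
  (eventually_forall_mem_ball_atTop h 1).mono fun x hx =>
    EventuallyEq.iteratedDeriv_eq j (eventually_of_mem (ball_mem_nhds x one_pos) hx)

lemma iteratedDeriv_eventuallyEq_atBot (h : f =ᶠ[atBot] g) (j : ℕ) :
    iteratedDeriv j f =ᶠ[atBot] iteratedDeriv j g :=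
  (eventually_forall_mem_ball_atBot h 1).mono fun x hx =>
    EventuallyEq.iteratedDeriv_eq j (eventually_of_mem (ball_mem_nhds x one_pos) hx)

end IteratedDeriv

lemma exists_pos_forall_le_of_eventually_nonpos {X : Type*} [TopologicalSpace X] {f : X → ℝ}
    (hf : Continuous f) (h : ∀ᶠ x in coclosedCompact X, f x ≤ 0) : ∃ c, 0 < c ∧ ∀ x, f x ≤ c := by
  have hsupp : HasCompactSupport fun x => max (f x) 0 :=
    hasCompactSupport_iff_eventuallyEq.2 (h.mono fun _ hx => max_eq_right hx)
  obtain ⟨C, hC⟩ := (hf.max continuous_const).bddAbove_range_of_hasCompactSupport hsupp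
  refine ⟨max C 1, by positivity, fun x => ?_⟩
  calc f x ≤ max (f x) 0 := le_max_left _ _
    _ ≤ C := hC (mem_range_self x)
    _ ≤ max C 1 := le_max_left _ _

lemma descFactorial_mul_pow_le_pow {R : Type*} [Semiring R] [PartialOrder R] [IsOrderedRing R]
    {n : ℕ} {x : R} (hx : n ≤ x) (j : ℕ) : n.descFactorial j * x ^ (n - j) ≤ x ^ n := by
  have hx0 : 0 ≤ x := n.cast_nonneg.trans hx
  rcases lt_or_ge n j with hnj | hjn
  · simpa only [Nat.descFactorial_of_lt hnj, Nat.cast_zero, zero_mul] using pow_nonneg hx0 n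
  · calc (n.descFactorial j : R) * x ^ (n - j) ≤ (n : R) ^ j * x ^ (n - j) := by
          gcongr
          exact (Nat.mono_cast (n.descFactorial_le_pow j)).trans_eq (Nat.cast_pow n j)
      _ ≤ x ^ j * x ^ (n - j) := by gcongr
      _ = x ^ n := by rw [← pow_add, Nat.add_sub_cancel' hjn]

lemma exists_forall_abs_iteratedDeriv_le_add {f : ℝ → ℝ} {n j : ℕ} (hf : ContDiff ℝ j f)
    (hbot : f =ᶠ[atBot] fun _ => 0) (htop : f =ᶠ[atTop] fun x => x ^ n) :
    ∃ c, 0 < c ∧ ∀ x, |iteratedDeriv j f x| ≤ c + f x := by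
  have hcont : Continuous fun x => |iteratedDeriv j f x| - f x :=
    (hf.continuous_iteratedDeriv' j).abs.sub hf.continuous
  have hnonpos_bot : ∀ᶠ x in atBot, |iteratedDeriv j f x| - f x ≤ 0 := by
    filter_upwards [hbot, iteratedDeriv_eventuallyEq_atBot hbot j] with x hx hderiv
    simp [hx, hderiv]
  have hnonpos_top : ∀ᶠ x in atTop, |iteratedDeriv j f x| - f x ≤ 0 := by
    filter_upwards [htop, iteratedDeriv_eventuallyEq_atTop htop j,
      eventually_ge_atTop (n : ℝ)] with x hx hderiv hnx
    have hx0 : 0 ≤ x := n.cast_nonneg.trans hnx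
    rw [hx, hderiv, iteratedDeriv_pow, abs_of_nonneg (by positivity), sub_nonpos]
    exact descFactorial_mul_pow_le_pow hnx j
  obtain ⟨c, hc, hle⟩ := exists_pos_forall_le_of_eventually_nonpos hcont <| by
    rw [coclosedCompact_eq_cocompact, cocompact_eq_atBot_atTop]
    exact eventually_sup.2 ⟨hnonpos_bot, hnonpos_top⟩
  exact ⟨c, hc, fun x => sub_le_iff_le_add.1 (hle x)⟩

lemma convolution_eventuallyEq_const {G E : Type*} [SeminormedAddCommGroup G] [MeasurableSpace G]
    {μ : Measure G} [NormedAddCommGroup E] [NormedSpace ℝ E] [CompleteSpace E]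
    {φ : G → ℝ} {g : G → E} {l : Filter G} {a : E} (hφ : HasCompactSupport φ)
    (hg : ∀ R, ∀ᶠ x in l, ∀ y ∈ ball x R, g y = a) :
    φ ⋆[ContinuousLinearMap.lsmul ℝ ℝ, μ] g =ᶠ[l] fun _ => (∫ t, φ t ∂μ) • a := by
  obtain ⟨R, hR, hsupp⟩ := hφ.isCompact.isBounded.subset_ball_lt 0 0
  filter_upwards [hg R] with x hx
  have hxa : g x = a := hx x (mem_ball_self hR)
  rw [convolution_eq_right' _ ((subset_tsupport φ).trans hsupp)
    fun y hy => (hx y hy).trans hxa.symm, hxa]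
  exact integral_smul_const φ a

section Mollifier

variable {ρ : ℝ → ℝ} {ε : ℝ}

lemma contDiff_mollifier {k : WithTop ℕ∞} (hρ : ContDiff ℝ k ρ) :
    ContDiff ℝ k (mollifier ρ ε) :=
  contDiff_const.mul (hρ.comp (contDiff_id.div_const ε))

lemma hasCompactSupport_mollifier (hρ : HasCompactSupport ρ) (hε : ε ≠ 0) :
    HasCompactSupport (mollifier ρ ε) := by
  have hscaled : HasCompactSupport fun x => ρ (x / ε) := by
    simpa only [smul_eq_mul, inv_mul_eq_div] using hρ.comp_smul (inv_ne_zero hε)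
  exact hscaled.mul_left

lemma integral_mollifier (hε : 0 < ε) : ∫ x, mollifier ρ ε x = ∫ x, ρ x := by
  simp only [mollifier]
  rw [integral_const_mul, Measure.integral_comp_div ρ ε, abs_of_pos hε, smul_eq_mul,
    inv_mul_cancel_left₀ hε.ne']

end Mollifier

section Ramp

variable (ε b : ℝ)

lemma nuFun_mem_Icc (x : ℝ) : nuFun ε b x ∈ Icc 0 1 := by
  unfold nuFun
  split_ifs with hleft hright
  · exact ⟨le_rfl, zero_le_one⟩
  · have hlen : 0 < b - 3 * ε := by linarith
    exact ⟨div_nonneg (by linarith) hlen.le, (div_le_one hlen).2 (by linarith)⟩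
  · exact ⟨zero_le_one, le_rfl⟩

lemma measurable_nuFun : Measurable (nuFun ε b) :=
  Measurable.ite measurableSet_Iic measurable_const
    (Measurable.ite measurableSet_Iic (by fun_prop) measurable_const)

lemma locallyIntegrable_nuFun : LocallyIntegrable (nuFun ε b) := by
  have hbound : ∀ x, ‖nuFun ε b x‖ ≤ 1 := fun x => by
    rw [Real.norm_of_nonneg (nuFun_mem_Icc ε b x).1]
    exact (nuFun_mem_Icc ε b x).2
  exact (memLp_top_of_bound (measurable_nuFun ε b).aestronglyMeasurable 1
    (Eventually.of_forall hbound)).locallyIntegrable le_top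

lemma nuFun_eventuallyEq_zero_atBot : nuFun ε b =ᶠ[atBot] fun _ => 0 := by
  filter_upwards [eventually_le_atBot (2 * ε)] with x hx
  exact if_pos hx

lemma nuFun_eventuallyEq_one_atTop : nuFun ε b =ᶠ[atTop] fun _ => 1 := by
  filter_upwards [eventually_gt_atTop (2 * ε), eventually_gt_atTop (b - ε)] with x hleft hright
  rw [nuFun, if_neg hleft.not_ge, if_neg hright.not_ge]

end Ramp

section CutOff

variable {ρ : ℝ → ℝ} {ε : ℝ}

lemma chi0_eq_convolution (b : ℝ) : chi0 ρ ε b = mollifier ρ ε ⋆ nuFun ε b := by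
  ext x
  simp only [chi0, convolution_lsmul_swap, smul_eq_mul]

lemma contDiff_chi0 {k : ℕ∞} (hρs : ContDiff ℝ k ρ) (hρc : HasCompactSupport ρ) (hε : ε ≠ 0)
    (b : ℝ) : ContDiff ℝ k (chi0 ρ ε b) := by
  rw [chi0_eq_convolution]
  exact (hasCompactSupport_mollifier hρc hε).contDiff_convolution_left _
    (contDiff_mollifier hρs) (locallyIntegrable_nuFun ε b)

lemma chi0_eventuallyEq_zero_atBot (hρc : HasCompactSupport ρ) (hε : ε ≠ 0) (b : ℝ) :
    chi0 ρ ε b =ᶠ[atBot] fun _ => 0 := by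
  simpa only [chi0_eq_convolution, smul_zero] using
    convolution_eventuallyEq_const (μ := volume) (hasCompactSupport_mollifier hρc hε)
      (eventually_forall_mem_ball_atBot (nuFun_eventuallyEq_zero_atBot ε b))

lemma chi0_eventuallyEq_integral_atTop (hρc : HasCompactSupport ρ) (hε : 0 < ε) (b : ℝ) :
    chi0 ρ ε b =ᶠ[atTop] fun _ => ∫ x, ρ x := by
  simpa only [chi0_eq_convolution, integral_mollifier hε, smul_eq_mul, mul_one] using
    convolution_eventuallyEq_const (μ := volume) (hasCompactSupport_mollifier hρc hε.ne')
      (eventually_forall_mem_ball_atTop (nuFun_eventuallyEq_one_atTop ε b))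

end CutOff

theorem statement5_general {ρ : ℝ → ℝ} {j : ℕ} (hρs : ContDiff ℝ j ρ) (hρc : HasCompactSupport ρ)
    (hρint : ∫ x, ρ x = 1) {ε : ℝ} (hε : 0 < ε) (b : ℝ) (n : ℕ) :
    ∃ c : ℝ, 0 < c ∧ ∀ x : ℝ, |iteratedDeriv j (chiN ρ n ε b) x| ≤ c + chiN ρ n ε b x := by
  apply exists_forall_abs_iteratedDeriv_le_add (n := n)
  · exact (contDiff_id.pow n).mul (contDiff_chi0 (k := j) hρs hρc hε.ne' b)
  · filter_upwards [chi0_eventuallyEq_zero_atBot hρc hε.ne' b] with x hx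
    rw [chiN, hx, mul_zero]
  · filter_upwards [chi0_eventuallyEq_integral_atTop hρc hε b] with x hx
    rw [chiN, hx, hρint, mul_one]

theorem statement5 (ρ : ℝ → ℝ) (hρs : ContDiff ℝ (⊤ : ℕ∞) ρ) (hρc : HasCompactSupport ρ)
    (hρ0 : ∀ x, 0 ≤ ρ x) (hρe : ∀ x, ρ (-x) = ρ x)
    (hρsupp : Function.support ρ ⊆ Set.Ioo (-1) 1) (hρint : ∫ x : ℝ, ρ x = 1)
    (ε b : ℝ) (hε : 0 < ε) (hb : 5 * ε ≤ b) (n : ℕ) (hn : 1 ≤ n) :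
    ∀ j ∈ ({1, 2, 3} : Set ℕ), ∃ c : ℝ, 0 < c ∧ ∀ x : ℝ,
      |iteratedDeriv j (chiN ρ n ε b) x| ≤ c + chiN ρ n ε b x := fun _ _ =>
  statement5_general (hρs.of_le (by exact_mod_cast le_top)) hρc hρint hε b n
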